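/- Let (a_1, ..., a_n) be a sequence of positive integers with M(a_1, ..., a_n) = −Id (a solution of Problem II). Then a_i ≤ n − 2 for every index i. -/

import Mathlib

open Matrix

def elemMat (a : ℤ) : Matrix (Fin 2) (Fin 2) ℤ := !![a, -1; 1, 0]

/-- `M (a₁ :: ... :: aₙ)` is the product `E(aₙ) ⋯ E(a₁)` with the factor for `a₁` rightmost. -/
def M : List ℤ → Matrix (Fin 2) (Fin 2) ℤ
  | [] => 1
  | a :: t => M t * elemMat a


def PM (l : List ℤ) : Prop := M l = 1 ∨ M l = -1

theorem M_append (s t : List ℤ) : M (s ++ t) = M t * M s := by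
  induction s with
  | nil => simp [M]
  | cons a s ih => simp [M, ih, Matrix.mul_assoc]

theorem PM_rot {s t : List ℤ} (h : PM (s ++ t)) : PM (t ++ s) := by
  unfold PM at *
  rw [M_append] at *
  rcases h with h | h
  · left; exact mul_eq_one_comm.mp h
  · right
    have h1 : (-M t) * M s = 1 := by rw [neg_mul, h, neg_neg]
    have h2 := mul_eq_one_comm.mp h1
    rw [mul_neg] at h2
    rw [← h2, neg_neg]

theorem PM_ent {l : List ℤ} (h : PM l) : M l 1 0 = 0 := by
  rcases h with h | h <;> simp [h]

theorem PM_ent2 {l : List ℤ} (h : PM l) : M l 0 1 = 0 := by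
  rcases h with h | h <;> simp [h]

theorem big_aux (l : List ℤ) (h : ∀ x ∈ l, 2 ≤ x) :
    0 ≤ M l 1 0 ∧ 0 < M l 1 0 + M l 1 1 ∧ (l ≠ [] → 0 < M l 1 0) := by
  induction l with
  | nil => simp [M]
  | cons a s ih =>
    obtain ⟨h1, h2, -⟩ := ih (fun x hx => h x (by simp [hx]))
    have ha : 2 ≤ a := h a (by simp)
    have e1 : M (a :: s) 1 0 = M s 1 0 * a + M s 1 1 := by
      simp [M, elemMat, Matrix.mul_apply, Fin.sum_univ_two]
    have e2 : M (a :: s) 1 1 = - M s 1 0 := by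
      simp [M, elemMat, Matrix.mul_apply, Fin.sum_univ_two]
    rw [e1, e2]
    refine ⟨by nlinarith, by nlinarith, fun _ => by nlinarith⟩

theorem red1 (a b : ℤ) (m : List ℤ) : M (a :: 1 :: b :: m) = M ((a-1) :: (b-1) :: m) := by
  simp only [M, Matrix.mul_assoc]
  congr 1
  ext i j
  fin_cases i <;> fin_cases j <;>
    simp [elemMat, Matrix.mul_apply, Fin.sum_univ_two] <;> ring

theorem red2 (a b : ℤ) (m : List ℤ) : M (a :: 1 :: 1 :: b :: m) = - M ((a+b-1) :: m) := by
  simp only [M, Matrix.mul_assoc]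
  rw [← Matrix.mul_neg]
  congr 1
  ext i j
  fin_cases i <;> fin_cases j <;>
    simp [elemMat, Matrix.mul_apply, Fin.sum_univ_two] <;> ring

theorem main_aux (N : ℕ) : ∀ l : List ℤ, l.length = N → (∀ x ∈ l, 0 < x) → PM l →
    ∀ x ∈ l, x ≤ (N : ℤ) - 2 := by
  induction N using Nat.strong_induction_on with
  | _ N ih =>
  intro l hl hpos hP
  -- the case of two adjacent ones
  have key2 : ∀ (a b : ℤ) (m : List ℤ), (a :: 1 :: 1 :: b :: m).length = N →
      (∀ x ∈ a :: 1 :: 1 :: b :: m, 0 < x) → PM (a :: 1 :: 1 :: b :: m) →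
      ∀ x ∈ a :: 1 :: 1 :: b :: m, x ≤ (N : ℤ) - 2 := by
    intro a b m hN hp hQ
    simp only [List.length_cons] at hN
    simp only [List.mem_cons, forall_eq_or_imp] at hp ⊢
    obtain ⟨ha, -, -, hb, hm⟩ := hp
    have hQ' : PM ((a+b-1) :: m) := by
      unfold PM at *
      rw [red2] at hQ
      rcases hQ with h | h
      · right; rw [← h, neg_neg]
      · left; exact neg_injective h
    have := ih (m.length + 1) (by omega) ((a+b-1) :: m) (by simp)
      (by simp only [List.mem_cons, forall_eq_or_imp]; exact ⟨by omega, hm⟩) hQ'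
    simp only [List.mem_cons, forall_eq_or_imp] at this
    obtain ⟨h1, h2⟩ := this
    refine ⟨by omega, by omega, by omega, by omega, fun x hx => ?_⟩
    have := h2 x hx
    omega
  have key1 : ∀ (a b : ℤ) (m : List ℤ), (a :: 1 :: b :: m).length = N →
      (∀ x ∈ a :: 1 :: b :: m, 0 < x) → PM (a :: 1 :: b :: m) →
      ∀ x ∈ a :: 1 :: b :: m, x ≤ (N : ℤ) - 2 := by
    intro a b m hN hp hQ
    by_cases ha1 : a = 1
    · subst ha1
      rcases List.eq_nil_or_concat m with rfl | ⟨m', c, rfl⟩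
      · have := PM_ent2 hQ
        simp [M, elemMat, Matrix.mul_apply, Fin.sum_univ_two] at this
        simp at hN ⊢
        omega
      · have hr : PM (c :: 1 :: 1 :: b :: m') := by
          have := PM_rot (s := 1 :: 1 :: b :: m') (t := [c]) (by simpa using hQ)
          simpa using this
        intro x hx
        refine key2 c b m' (by simpa using hN) (fun y hy => hp y ?_) hr x ?_
        · simp at hy ⊢; tauto
        · simp at hx ⊢; tauto
    by_cases hb1 : b = 1
    · subst hb1
      rcases m with _ | ⟨c, m'⟩
      · have := PM_ent hQ
        simp [M, elemMat, Matrix.mul_apply, Fin.sum_univ_two] at this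
        simp at hN ⊢
        omega
      · exact key2 a c m' hN hp hQ
    simp only [List.length_cons] at hN
    simp only [List.mem_cons, forall_eq_or_imp] at hp ⊢
    obtain ⟨ha, -, hb, hm⟩ := hp
    have hQ' : PM ((a-1) :: (b-1) :: m) := by
      unfold PM at *
      rwa [red1] at hQ
    have := ih (m.length + 2) (by omega) ((a-1) :: (b-1) :: m) (by simp)
      (by simp only [List.mem_cons, forall_eq_or_imp]; exact ⟨by omega, by omega, hm⟩) hQ'
    simp only [List.mem_cons, forall_eq_or_imp] at this
    obtain ⟨h1, h2, h3⟩ := this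
    refine ⟨by omega, by omega, by omega, fun x hx => ?_⟩
    have := h3 x hx
    omega
  by_cases h1 : (1 : ℤ) ∈ l
  · obtain ⟨s, t, rfl⟩ := List.append_of_mem h1
    have hr := PM_rot hP
    simp only [List.cons_append] at hr
    obtain ⟨r, hrr⟩ : ∃ r, r = t ++ s := ⟨_, rfl⟩
    have hmem : ∀ x, x ∈ s ++ 1 :: t ↔ x ∈ 1 :: r := by
      intro x; rw [hrr]; simp; tauto
    have hlen : (1 :: r).length = N := by
      rw [hrr, ← hl]; simp; omega
    rw [← hrr] at hr
    simp only [hmem] at hpos ⊢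
    rcases List.eq_nil_or_concat r with rfl | ⟨q, a, rfl⟩
    · have := PM_ent hr
      simp [M, elemMat] at this
    · have hr2 : PM (a :: 1 :: q) := by
        have := PM_rot (s := 1 :: q) (t := [a]) (by simpa using hr)
        simpa using this
      rcases q with _ | ⟨b, m⟩
      · have := PM_ent hr2
        have := hpos a (by simp)
        simp_all [M, elemMat, Matrix.mul_apply, Fin.sum_univ_two]
      · intro x hx
        refine key1 a b m (by simpa using hlen) (fun y hy => hpos y ?_) hr2 x ?_
        · simp at hy ⊢; tauto
        · simp at hx ⊢; tauto
  · intro x hx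
    have h2 := (big_aux l (fun y hy => by
      have := hpos y hy
      have : y ≠ 1 := fun h => h1 (h ▸ hy)
      omega)).2.2 (List.ne_nil_of_mem hx)
    have := PM_ent hP
    omega

/-- For a solution of Problem II, every entry satisfies `aᵢ ≤ n - 2`. -/
theorem problemII_entry_bound (l : List ℤ) (hpos : ∀ x ∈ l, 0 < x)
    (h : M l = -1) :
    ∀ x ∈ l, x ≤ (l.length : ℤ) - 2 := by
  exact main_aux l.length l rfl hpos (Or.inr h)
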